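/- The modified Hochschild differential satisfies the graded Leibniz rule with respect to the Gerstenhaber bracket: for f ∈ C^{p+1}(A,A) and g ∈ C^{q+1}(A,A), d_H [f,g]_G = [d_H f, g]_G + (−1)^p [f, d_H g]_G. -/

import Mathlib

/-- Partial (Gerstenhaber) composition: for `F ∈ C^{p+1}`, `G ∈ C^{q+1}` and `0 ≤ i ≤ p`,
`(F •_i G)(u₀,…,u_{p+q}) = F(u₀,…,u_{i−1}, G(u_i,…,u_{i+q}), u_{i+q+1},…,u_{p+q})`. -/
def pcomp {A : Type*} [Ring A] (p q : ℕ) (i : Fin (p + 1))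
    (F : (Fin (p + 1) → A) → A) (G : (Fin (q + 1) → A) → A) :
    (Fin (p + q + 1) → A) → A :=
  fun u => F (fun m =>
    if (m : ℕ) < (i : ℕ) then u ⟨(m : ℕ), by omega⟩
    else if (m : ℕ) = (i : ℕ) then G (fun l => u ⟨(i : ℕ) + (l : ℕ), by omega⟩)
    else u ⟨(m : ℕ) + q, by omega⟩)

/-- The Gerstenhaber product `F • G = Σ_{i=0}^{p} (−1)^{iq} F •_i G`. -/
def gprod {A : Type*} [Ring A] (p q : ℕ)
    (F : (Fin (p + 1) → A) → A) (G : (Fin (q + 1) → A) → A) :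
    (Fin (p + q + 1) → A) → A :=
  fun u => ∑ i : Fin (p + 1), ((-1 : ℤ) ^ ((i : ℕ) * q)) • pcomp p q i F G u

/-- Reindexing a cochain along an equality of arities. -/
def recast {A : Type*} [Ring A] {n m : ℕ} (h : n = m) (F : (Fin n → A) → A) :
    (Fin m → A) → A :=
  fun u => F (fun j => u (Fin.cast h j))

/-- The Gerstenhaber bracket `[F,G]_G = F • G − (−1)^{pq} G • F`. -/
def gbr {A : Type*} [Ring A] (p q : ℕ)
    (F : (Fin (p + 1) → A) → A) (G : (Fin (q + 1) → A) → A) :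
    (Fin (p + q + 1) → A) → A :=
  fun u => gprod p q F G u
    - ((-1 : ℤ) ^ (p * q)) • recast (by omega) (gprod q p G F) u

/-- The Hochschild differential on set-level cochains. -/
def hochschild {A : Type*} [Ring A] (p : ℕ) (F : (Fin p → A) → A) :
    (Fin (p + 1) → A) → A :=
  fun u =>
    u 0 * F (fun i => u i.succ)
      + ∑ s ∈ Finset.range p, ((-1 : ℤ) ^ (s + 1)) •
          F (fun i => if (i : ℕ) < s then u i.castSucc
              else if (i : ℕ) = s then u i.castSucc * u i.succ
              else u i.succ)
      + ((-1 : ℤ) ^ (p + 1)) • (F (fun i => u i.castSucc) * u (Fin.last p))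

/-- The modified Hochschild differential `d_H F = (−1)^{n+1} δF` for `F ∈ Cⁿ(A,A)`. -/
def dH {A : Type*} [Ring A] (n : ℕ) (F : (Fin n → A) → A) : (Fin (n + 1) → A) → A :=
  ((-1 : ℤ) ^ (n + 1)) • hochschild n F

/-!
The modified differential is an inner derivation: `d_H F = [μ, F]_G`, where `μ ∈ C²(A,A)` is the
multiplication. The Leibniz rule is therefore the graded Jacobi identity for `μ`, `f` and `g`.
Jacobi in turn holds because the product `•` is graded pre-Lie: expanding `(F • G) • H`, the terms
in which `H` is inserted into `G` make up `F • (G • H)`, and what is left inserts `G` and `H` into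
different slots of `F`, an expression which is graded symmetric in `G` and `H`.

To avoid transporting cochains along equalities of arities, the computation takes place in the
single space of functions of infinite sequences, into which all cochains embed.
-/

/-- A cochain of unspecified arity: a function of infinite sequences. One which depends only on the
first `n` entries stands for a cochain of arity `n`; see `SeqCochain.ofFin`. -/
abbrev SeqCochain (A : Type*) := (ℕ → A) → A

namespace SeqCochain

variable {A : Type*}

section PartialComposition

/-- The partial composition `F •_i G`, where `G` has arity `q + 1`. -/
def partialComp (q i : ℕ) (F G : SeqCochain A) : SeqCochain A := fun u =>
  F fun m => if m < i then u m else if m = i then G fun l => u (i + l) else u (m + q)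

theorem partialComp_apply_eq_update (q i : ℕ) (F G : SeqCochain A) (u : ℕ → A) :
    partialComp q i F G u =
      F (Function.update (fun m => if m < i then u m else u (m + q)) i (G fun l => u (i + l))) := by
  unfold partialComp
  congr 1
  funext m
  rcases eq_or_ne m i with rfl | hm
  · simp
  · simp [hm]

theorem partialComp_partialComp_nested {q j : ℕ} (hj : j ≤ q) (r i : ℕ) (F G H : SeqCochain A) :
    partialComp r (i + j) (partialComp q i F G) H =
      partialComp (q + r) i F (partialComp r j G H) := by
  funext u
  unfold partialComp
  congr 1
  funext m
  rcases lt_trichotomy m i with hm | rfl | hm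
  · simp [hm, show m < i + j by omega]
  · simp only [lt_irrefl, if_false, if_true]
    congr 1
    funext l
    rcases lt_trichotomy l j with hl | rfl | hl
    · simp [hl]
    · simp [add_assoc]
    · simp [hl.not_gt, hl.ne', add_assoc]
  · simp [hm.not_gt, hm.ne', show ¬ m + q < i + j by omega, show m + q ≠ i + j by omega, add_assoc]

theorem partialComp_partialComp_disjoint {q i j : ℕ} (hij : i < j) (r : ℕ) (F : SeqCochain A)
    {G : SeqCochain A} (hG : DependsOn G (Set.Iio (q + 1))) (H : SeqCochain A) :
    partialComp r (j + q) (partialComp q i F G) H =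
      partialComp q i (partialComp r j F H) G := by
  funext u
  unfold partialComp
  congr 1
  funext m
  rcases lt_trichotomy m i with hm | rfl | hm
  · simp [hm, show m < j + q by omega, show m < j by omega]
  · simp only [lt_irrefl, if_false, if_true, hij]
    refine hG fun l hl => ?_
    rw [Set.mem_Iio] at hl
    simp [show m + l < j + q by omega]
  · rcases lt_trichotomy m j with hmj | rfl | hmj
    · simp [hmj, hm.not_gt, hm.ne']
    · simp only [lt_irrefl, if_false, if_true, hm.not_gt, hm.ne']
      congr 1
      funext l
      simp [show ¬ m + l < i by omega, show m + l ≠ i by omega, add_right_comm]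
    · simp [hm.not_gt, hm.ne', hmj.not_gt, hmj.ne', show ¬ m + r < i by omega,
        show m + r ≠ i by omega, add_right_comm]

theorem partialComp_smul_left {R : Type*} [SMul R A] (q i : ℕ) (c : R) (F G : SeqCochain A) :
    partialComp q i (c • F) G = c • partialComp q i F G := rfl

theorem partialComp_sub_left [Sub A] (q i : ℕ) (F F' G : SeqCochain A) :
    partialComp q i (F - F') G = partialComp q i F G - partialComp q i F' G := rfl

end PartialComposition

/-- `F` is additive in the entry of index `i` of its argument. Multilinearity of a cochain
of arity `n` enters the computation only as this property for all `i < n`. -/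
def IsAdditiveAt [Add A] (F : SeqCochain A) (i : ℕ) : Prop :=
  ∀ (u : ℕ → A) (x y : A), F (Function.update u i (x + y)) =
    F (Function.update u i x) + F (Function.update u i y)

theorem partialComp_add_right [Add A] {F : SeqCochain A} {i : ℕ} (hF : IsAdditiveAt F i) (q : ℕ)
    (G H : SeqCochain A) :
    partialComp q i F (G + H) = partialComp q i F G + partialComp q i F H := by
  funext u
  simpa only [Pi.add_apply, partialComp_apply_eq_update] using hF _ _ _

section AddCommGroup

variable [AddCommGroup A]

theorem partialComp_sum_left {ι : Type*} (q i : ℕ) (s : Finset ι) (F : ι → SeqCochain A)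
    (G : SeqCochain A) :
    partialComp q i (∑ j ∈ s, F j) G = ∑ j ∈ s, partialComp q i (F j) G :=
  map_sum (AddMonoidHom.mk' (partialComp q i · G) fun _ _ => rfl) F s

theorem partialComp_zsmul_right {F : SeqCochain A} {i : ℕ} (hF : IsAdditiveAt F i) (q : ℕ) (n : ℤ)
    (G : SeqCochain A) :
    partialComp q i F (n • G) = n • partialComp q i F G :=
  map_zsmul (AddMonoidHom.mk' (partialComp q i F) (partialComp_add_right hF q)) n G

theorem partialComp_sum_right {ι : Type*} {F : SeqCochain A} {i : ℕ} (hF : IsAdditiveAt F i)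
    (q : ℕ) (s : Finset ι) (G : ι → SeqCochain A) :
    partialComp q i F (∑ j ∈ s, G j) = ∑ j ∈ s, partialComp q i F (G j) :=
  map_sum (AddMonoidHom.mk' (partialComp q i F) (partialComp_add_right hF q)) G s

section Product

/-- The Gerstenhaber product `F • G`, where `F` has arity `p + 1` and `G` has arity `q + 1`. -/
def product (p q : ℕ) (F G : SeqCochain A) : SeqCochain A :=
  ∑ i ∈ Finset.range (p + 1), (-1 : ℤ) ^ (i * q) • partialComp q i F G

theorem product_sub_left (p q : ℕ) (F F' G : SeqCochain A) :
    product p q (F - F') G = product p q F G - product p q F' G := by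
  simp only [product, partialComp_sub_left, smul_sub, Finset.sum_sub_distrib]

theorem product_zsmul_left (p q : ℕ) (n : ℤ) (F G : SeqCochain A) :
    product p q (n • F) G = n • product p q F G := by
  simp only [product, partialComp_smul_left, Finset.smul_sum, smul_comm n]

variable {p : ℕ} {F : SeqCochain A}

theorem product_add_right (hF : ∀ i < p + 1, IsAdditiveAt F i) (q : ℕ) (G H : SeqCochain A) :
    product p q F (G + H) = product p q F G + product p q F H := by
  simp only [product, ← Finset.sum_add_distrib]
  refine Finset.sum_congr rfl fun i hi => ?_
  rw [partialComp_add_right (hF i (Finset.mem_range.mp hi)), smul_add]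

theorem product_sub_right (hF : ∀ i < p + 1, IsAdditiveAt F i) (q : ℕ) (G H : SeqCochain A) :
    product p q F (G - H) = product p q F G - product p q F H :=
  map_sub (AddMonoidHom.mk' (product p q F) (product_add_right hF q)) G H

theorem product_zsmul_right (hF : ∀ i < p + 1, IsAdditiveAt F i) (q : ℕ) (n : ℤ)
    (G : SeqCochain A) :
    product p q F (n • G) = n • product p q F G :=
  map_zsmul (AddMonoidHom.mk' (product p q F) (product_add_right hF q)) n G

theorem product_product_left (p q r : ℕ) (F G H : SeqCochain A) :
    product (p + q) r (product p q F G) H =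
      ∑ i ∈ Finset.range (p + 1), ∑ j ∈ Finset.range (p + q + 1),
        (-1 : ℤ) ^ (i * q + j * r) • partialComp r j (partialComp q i F G) H := by
  simp only [product, partialComp_sum_left, partialComp_smul_left, Finset.smul_sum, smul_smul,
    ← pow_add]
  rw [Finset.sum_comm]
  simp only [add_comm]

theorem product_product_right (hF : ∀ i < p + 1, IsAdditiveAt F i) (q r : ℕ)
    (G H : SeqCochain A) :
    product p (q + r) F (product q r G H) =
      ∑ i ∈ Finset.range (p + 1), ∑ j ∈ Finset.range (q + 1),
        (-1 : ℤ) ^ (i * q + (i + j) * r) • partialComp r (i + j) (partialComp q i F G) H := by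
  refine Finset.sum_congr rfl fun i hi => ?_
  have hFi := hF i (Finset.mem_range.mp hi)
  rw [product, partialComp_sum_right hFi, Finset.smul_sum]
  refine Finset.sum_congr rfl fun j hj => ?_
  rw [partialComp_zsmul_right hFi, smul_smul, ← pow_add,
    partialComp_partialComp_nested (Nat.lt_succ_iff.mp (Finset.mem_range.mp hj))]
  ring_nf

end Product

section PreLie

/-- The brace `F{G, H}` of cochains of arities `p + 1`, `q + 1` and `r + 1`: the signed sum of all
ways to insert `G` and `H`, in this order from left to right, into two different slots `i < j`
of `F`. The insertion of `G` moves slot `j` to position `j + q`. -/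
def brace (p q r : ℕ) (F G H : SeqCochain A) : SeqCochain A :=
  ∑ j ∈ Finset.range (p + 1), ∑ i ∈ Finset.range j,
    (-1 : ℤ) ^ (i * q + (j + q) * r) • partialComp r (j + q) (partialComp q i F G) H

theorem neg_one_pow_smul_brace_swap (p q r : ℕ) (F G : SeqCochain A) {H : SeqCochain A}
    (hH : DependsOn H (Set.Iio (r + 1))) :
    (-1 : ℤ) ^ (q * r) • brace p r q F H G =
      ∑ i ∈ Finset.range (p + 1), ∑ j ∈ Finset.range i,
        (-1 : ℤ) ^ (i * q + j * r) • partialComp r j (partialComp q i F G) H := by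
  simp only [brace, Finset.smul_sum, smul_smul]
  refine Finset.sum_congr rfl fun i _ => Finset.sum_congr rfl fun j hj => ?_
  have hsign : (-1 : ℤ) ^ (q * r) * (-1) ^ (j * r + (i + r) * q) = (-1) ^ (i * q + j * r) := by
    rw [← pow_add, show q * r + (j * r + (i + r) * q) = i * q + j * r + 2 * (q * r) by ring,
      pow_add, pow_mul _ 2, neg_one_sq, one_pow, mul_one]
  rw [hsign, partialComp_partialComp_disjoint (Finset.mem_range.mp hj) _ _ hH]

/-- The middle range is that of the `q + 1` slots of `G` once `G` sits in slot `i` of `F`. -/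
theorem sum_range_range_eq_below_add_within_add_above {M : Type*} [AddCommMonoid M] (p q : ℕ)
    (T : ℕ → ℕ → M) :
    ∑ i ∈ Finset.range (p + 1), ∑ j ∈ Finset.range (p + q + 1), T i j =
      (∑ i ∈ Finset.range (p + 1), ∑ j ∈ Finset.range i, T i j)
      + (∑ i ∈ Finset.range (p + 1), ∑ j ∈ Finset.range (q + 1), T i (i + j))
      + ∑ j ∈ Finset.range (p + 1), ∑ i ∈ Finset.range j, T i (j + q) := by
  have above : ∑ j ∈ Finset.range (p + 1), ∑ i ∈ Finset.range j, T i (j + q) =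
      ∑ i ∈ Finset.range (p + 1), ∑ j ∈ Finset.Ico (i + 1) (p + 1), T i (j + q) := by
    refine Finset.sum_comm' fun i j => ?_
    simp only [Finset.mem_range, Finset.mem_Ico]
    omega
  rw [above, ← Finset.sum_add_distrib, ← Finset.sum_add_distrib]
  refine Finset.sum_congr rfl fun i hi => ?_
  obtain ⟨e, rfl⟩ := Nat.exists_eq_add_of_le (Nat.lt_succ_iff.mp (Finset.mem_range.mp hi))
  rw [show i + e + q + 1 = i + (q + 1) + e by ring, Finset.sum_range_add, Finset.sum_range_add,
    Finset.sum_Ico_eq_sum_range, show i + e + 1 - (i + 1) = e by omega]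
  simp only [show ∀ j, i + 1 + j + q = i + (q + 1) + j by intro j; ring]

variable {p q r : ℕ} {F G H : SeqCochain A}

theorem product_associator_eq_brace_add_brace (hF : ∀ i < p + 1, IsAdditiveAt F i)
    (hH : DependsOn H (Set.Iio (r + 1))) :
    product (p + q) r (product p q F G) H - product p (q + r) F (product q r G H) =
      brace p q r F G H + (-1 : ℤ) ^ (q * r) • brace p r q F H G := by
  rw [product_product_left, sum_range_range_eq_below_add_within_add_above,
    ← product_product_right hF, ← neg_one_pow_smul_brace_swap p q r F G hH, brace]
  abel

theorem product_preLie (hF : ∀ i < p + 1, IsAdditiveAt F i)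
    (hG : DependsOn G (Set.Iio (q + 1))) (hH : DependsOn H (Set.Iio (r + 1))) :
    product (p + q) r (product p q F G) H - product p (q + r) F (product q r G H) =
      (-1 : ℤ) ^ (q * r) • (product (p + r) q (product p r F H) G
        - product p (q + r) F (product r q H G)) := by
  rw [add_comm q r, product_associator_eq_brace_add_brace hF hG, add_comm r q,
    product_associator_eq_brace_add_brace hF hH, mul_comm r q, smul_add, smul_smul, ← mul_pow,
    neg_one_mul, neg_neg, one_pow, one_smul, add_comm]

end PreLie

section Bracket

/-- The Gerstenhaber bracket `[F, G]_G`, where `F` has arity `p + 1` and `G` has arity `q + 1`. -/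
def bracket (p q : ℕ) (F G : SeqCochain A) : SeqCochain A :=
  product p q F G - (-1 : ℤ) ^ (p * q) • product q p G F

theorem bracket_graded_jacobi {p q r : ℕ} {F G H : SeqCochain A}
    (hF : ∀ i < p + 1, IsAdditiveAt F i) (hG : ∀ i < q + 1, IsAdditiveAt G i)
    (hH : ∀ i < r + 1, IsAdditiveAt H i) (hF' : DependsOn F (Set.Iio (p + 1)))
    (hG' : DependsOn G (Set.Iio (q + 1))) (hH' : DependsOn H (Set.Iio (r + 1))) :
    bracket p (q + r) F (bracket q r G H) =
      bracket (p + q) r (bracket p q F G) H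
        + (-1 : ℤ) ^ (p * q) • bracket q (p + r) G (bracket p r F H) := by
  have preLieF := sub_eq_iff_eq_add.mp (product_preLie hF hG' hH')
  have preLieG := sub_eq_iff_eq_add.mp (product_preLie hG hF' hH')
  have preLieH := sub_eq_iff_eq_add.mp (product_preLie hH hF' hG')
  rw [add_comm q p] at preLieG
  rw [add_comm r p, add_comm r q] at preLieH
  simp only [bracket, product_sub_left, product_zsmul_left, product_sub_right hF,
    product_sub_right hG, product_sub_right hH, product_zsmul_right hF, product_zsmul_right hG,
    product_zsmul_right hH, preLieF, preLieG, preLieH]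
  simp only [mul_add, add_mul, pow_add, mul_comm q p]
  rcases neg_one_pow_eq_or ℤ (p * q) with hpq | hpq <;>
  rcases neg_one_pow_eq_or ℤ (p * r) with hpr | hpr <;>
  rcases neg_one_pow_eq_or ℤ (q * r) with hqr | hqr <;>
  simp only [hpq, hpr, hqr] <;> module

end Bracket

end AddCommGroup

section Multiplication

/-- The multiplication of `A` as a cochain of arity `2`. -/
def mul [Mul A] : SeqCochain A := fun u => u 0 * u 1

theorem dependsOn_mul [Mul A] : DependsOn (mul : SeqCochain A) (Set.Iio 2) := by
  intro u v huv
  simp [mul, huv 0, huv 1]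

theorem isAdditiveAt_mul [Distrib A] : ∀ i < 2, IsAdditiveAt (mul : SeqCochain A) i := by
  intro i hi u x y
  interval_cases i <;> simp [mul, add_mul, mul_add]

end Multiplication

section OfFin

variable {n : ℕ}

/-- A cochain of arity `n`, as a function of the first `n` entries of a sequence. -/
def ofFin (F : (Fin n → A) → A) : SeqCochain A := fun u => F fun i => u i

theorem ofFin_injective : Function.Injective (ofFin : ((Fin n → A) → A) → SeqCochain A) := by
  intro F G h
  funext u
  have : Nonempty A := ⟨F u⟩
  obtain ⟨v, rfl⟩ := Fin.val_injective.surjective_comp_right (γ := A) u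
  exact congrFun h v

theorem dependsOn_ofFin (F : (Fin n → A) → A) : DependsOn (ofFin F) (Set.Iio n) :=
  fun _ _ huv => congrArg F (funext fun i => huv i i.isLt)

theorem isAdditiveAt_ofFin {k : Type*} [Semiring k] [AddCommMonoid A] [Module k A]
    (f : MultilinearMap k (fun _ : Fin n => A) A) (i : ℕ) (hi : i < n) :
    IsAdditiveAt (ofFin f) i := by
  intro u x y
  have restrict_update (z : A) : (fun j : Fin n => Function.update u i z j) =
      Function.update (fun j : Fin n => u j) ⟨i, hi⟩ z :=
    Function.update_comp_eq_of_injective u Fin.val_injective ⟨i, hi⟩ z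
  simp only [ofFin, restrict_update, f.map_update_add]

theorem ofFin_add [Add A] (F G : (Fin n → A) → A) : ofFin (F + G) = ofFin F + ofFin G := rfl

theorem ofFin_smul {R : Type*} [SMul R A] (c : R) (F : (Fin n → A) → A) :
    ofFin (c • F) = c • ofFin F := rfl

variable [Ring A]

theorem ofFin_recast {m : ℕ} (h : n = m) (F : (Fin n → A) → A) :
    ofFin (recast h F) = ofFin F := rfl

theorem ofFin_gprod (p q : ℕ) (F : (Fin (p + 1) → A) → A) (G : (Fin (q + 1) → A) → A) :
    ofFin (gprod p q F G) = product p q (ofFin F) (ofFin G) := by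
  funext u
  simp only [product, Finset.sum_apply, Finset.sum_range]
  rfl

theorem ofFin_gbr (p q : ℕ) (F : (Fin (p + 1) → A) → A) (G : (Fin (q + 1) → A) → A) :
    ofFin (gbr p q F G) = bracket p q (ofFin F) (ofFin G) := by
  rw [bracket, ← ofFin_gprod, ← ofFin_gprod]
  rfl

theorem ofFin_hochschild (p : ℕ) (F : (Fin (p + 1) → A) → A) :
    ofFin (hochschild (p + 1) F) =
      partialComp p 1 mul (ofFin F) - product p 1 (ofFin F) mul
        + (-1 : ℤ) ^ p • partialComp p 0 mul (ofFin F) := by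
  funext u
  have first : partialComp p 1 mul (ofFin F) u = u 0 * F fun i => u i.succ := by
    simp [partialComp, mul, ofFin, add_comm]
  have last : partialComp p 0 mul (ofFin F) u = (F fun i => u i.castSucc) * u (p + 1) := by
    simp [partialComp, mul, ofFin, add_comm]
  have inner (s : ℕ) : partialComp 1 s (ofFin F) mul u =
      F fun i => if (i : ℕ) < s then u i.castSucc
        else if (i : ℕ) = s then u i.castSucc * u i.succ else u i.succ := by
    refine congrArg F (funext fun i => ?_)
    rcases eq_or_ne (i : ℕ) s with rfl | his
    · simp [mul]
    · simp [his]
  simp only [sub_eq_add_neg, Pi.add_apply, Pi.smul_apply, product, Finset.sum_apply, first, last,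
    inner, ← Finset.sum_neg_distrib, ← neg_smul]
  simp [ofFin, hochschild, pow_succ]

theorem ofFin_dH (p : ℕ) (F : (Fin (p + 1) → A) → A) :
    ofFin (dH (p + 1) F) = bracket 1 p mul (ofFin F) := by
  have product_mul : product 1 p mul (ofFin F) =
      partialComp p 0 mul (ofFin F) + (-1 : ℤ) ^ p • partialComp p 1 mul (ofFin F) := by
    simp [product, Finset.sum_range_succ]
  rw [dH, ofFin_smul, ofFin_hochschild, bracket, product_mul, one_mul, pow_add, pow_add, pow_one]
  rcases neg_one_pow_eq_or ℤ p with hp | hp <;> rw [hp] <;> module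

end OfFin

end SeqCochain

open SeqCochain in
theorem dH_gerstenhaber_leibniz_general {k : Type*} [Semiring k] {A : Type*} [Ring A] [Module k A]
    {p q : ℕ}
    (f : MultilinearMap k (fun _ : Fin (p + 1) => A) A)
    (g : MultilinearMap k (fun _ : Fin (q + 1) => A) A) :
    dH (p + q + 1) (gbr p q ⇑f ⇑g)
      = recast (Nat.succ_add p (q + 1)) (gbr (p + 1) q (dH (p + 1) ⇑f) ⇑g)
        + ((-1 : ℤ) ^ p) • recast rfl (gbr p (q + 1) ⇑f (dH (q + 1) ⇑g)) := by
  apply ofFin_injective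
  have jacobi := bracket_graded_jacobi isAdditiveAt_mul (isAdditiveAt_ofFin f)
    (isAdditiveAt_ofFin g) dependsOn_mul (dependsOn_ofFin f) (dependsOn_ofFin g)
  simpa only [ofFin_add, ofFin_smul, ofFin_recast, ofFin_gbr, ofFin_dH, one_mul, add_comm 1]
    using jacobi

/-- Graded Leibniz rule: for `f ∈ C^{p+1}(A,A)` and `g ∈ C^{q+1}(A,A)`,
`d_H [f,g]_G = [d_H f, g]_G + (−1)^p [f, d_H g]_G`. -/
theorem dH_gerstenhaber_leibniz (k : Type*) [Field k] (A : Type*) [Ring A] [Algebra k A]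
    (p q : ℕ)
    (f : MultilinearMap k (fun _ : Fin (p + 1) => A) A)
    (g : MultilinearMap k (fun _ : Fin (q + 1) => A) A) :
    dH (p + q + 1) (gbr p q ⇑f ⇑g)
      = recast (by omega) (gbr (p + 1) q (dH (p + 1) ⇑f) ⇑g)
        + ((-1 : ℤ) ^ p) • recast (by omega) (gbr p (q + 1) ⇑f (dH (q + 1) ⇑g)) :=
  dH_gerstenhaber_leibniz_general f g
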